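/- (Lemma 3, verification.) Let a, c, d : ℝ → ℝ be continuously differentiable, b : ℝ → ℝ continuous, a(t) ≠ 0 for all t, let C₀ be a real constant, and let κ : ℝ → ℝ be a twice continuously differentiable function with κ(t) ≠ 0 satisfying the auxiliary (Ermakov) equation κ′′ − (a′/a)κ′ + [4ab + (a′/a − c − d)(c + d) − c′ − d′]κ = C₀(2a)²/κ³. Set λ(t) = exp(∫₀ᵗ(c(s) − d(s))ds) and define A(t) = κ²λ, B(t) = [((κ′ − (c+d)κ)/(2a))² + C₀/κ²]·λ, C(t) = κ·((c+d)κ − κ′)/(2a)·λ. Then A, B, C satisfy the linear system A′ + 4aC − (3c + d)A = 0, B′ − 4bC + (c + 3d)B = 0, C′ + 2(aB − bA) − (c − d)C = 0. -/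

import Mathlib

/-- λ(t) = exp(∫₀ᵗ (c(s) − d(s)) ds). -/
noncomputable def lamFun (c d : ℝ → ℝ) (t : ℝ) : ℝ :=
  Real.exp (∫ s in (0:ℝ)..t, c s - d s)

/-- A(t) = κ²·λ. -/
noncomputable def Afun (c d κ : ℝ → ℝ) (t : ℝ) : ℝ :=
  κ t ^ 2 * lamFun c d t

/-- B(t) = [((κ′ − (c+d)κ)/(2a))² + C₀/κ²]·λ. -/
noncomputable def Bfun (a c d κ : ℝ → ℝ) (C₀ : ℝ) (t : ℝ) : ℝ :=
  (((deriv κ t - (c t + d t) * κ t) / (2 * a t)) ^ 2 + C₀ / κ t ^ 2) * lamFun c d t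

/-- C(t) = κ·((c+d)κ − κ′)/(2a)·λ. -/
noncomputable def Cfun (a c d κ : ℝ → ℝ) (t : ℝ) : ℝ :=
  κ t * (((c t + d t) * κ t - deriv κ t) / (2 * a t)) * lamFun c d t

/-!
The substitution `p = (κ' - (c + d) κ) / (2 a)` turns the second-order Ermakov equation into the
first-order system `κ' = 2 a p + (c + d) κ`, `p' = -2 b κ - (c + d) p + 2 a C₀ / κ³`: Hamilton's
equations of the quadratic Hamiltonian plus an inverse-cube force. In these variables
`A = κ² λ`, `B = (p² + C₀ / κ²) λ`, `C = -κ p λ`, and since `λ' = (c - d) λ` the linear system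
follows from the product rule.
-/

section ErmakovSystem

variable {𝕜 : Type*} [NontriviallyNormedField 𝕜] {x p l : 𝕜 → 𝕜} {a b c d C₀ t : 𝕜}

theorem hasDerivAt_sq_mul_of_ermakovSystem
    (hx : HasDerivAt x (2 * a * p t + (c + d) * x t) t)
    (hl : HasDerivAt l ((c - d) * l t) t) :
    HasDerivAt (fun s => x s ^ 2 * l s)
      ((3 * c + d) * (x t ^ 2 * l t) - 4 * a * (-(x t * p t) * l t)) t := by
  refine ((hx.fun_pow 2).fun_mul hl).congr_deriv ?_
  push_cast
  ring

theorem hasDerivAt_neg_mul_mul_of_ermakovSystem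
    (hx : HasDerivAt x (2 * a * p t + (c + d) * x t) t)
    (hp : HasDerivAt p (-2 * b * x t - (c + d) * p t + 2 * a * C₀ / x t ^ 3) t)
    (hl : HasDerivAt l ((c - d) * l t) t) (hx₀ : x t ≠ 0) :
    HasDerivAt (fun s => -(x s * p s) * l s)
      ((c - d) * (-(x t * p t) * l t)
        - 2 * (a * ((p t ^ 2 + C₀ / x t ^ 2) * l t) - b * (x t ^ 2 * l t))) t := by
  refine ((hx.fun_mul hp).fun_neg.fun_mul hl).congr_deriv ?_
  field

theorem hasDerivAt_const_div_sq {x' : 𝕜} (hx : HasDerivAt x x' t) (hx₀ : x t ≠ 0) :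
    HasDerivAt (fun s => C₀ / x s ^ 2) (-2 * C₀ * x' / x t ^ 3) t := by
  refine ((hasDerivAt_const t C₀).fun_div (hx.fun_pow 2) (pow_ne_zero 2 hx₀)).congr_deriv ?_
  push_cast
  field

theorem hasDerivAt_sq_add_div_sq_mul_of_ermakovSystem
    (hx : HasDerivAt x (2 * a * p t + (c + d) * x t) t)
    (hp : HasDerivAt p (-2 * b * x t - (c + d) * p t + 2 * a * C₀ / x t ^ 3) t)
    (hl : HasDerivAt l ((c - d) * l t) t) (hx₀ : x t ≠ 0) :
    HasDerivAt (fun s => (p s ^ 2 + C₀ / x s ^ 2) * l s)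
      (4 * b * (-(x t * p t) * l t) - (c + 3 * d) * ((p t ^ 2 + C₀ / x t ^ 2) * l t)) t := by
  refine (((hp.fun_pow 2).fun_add (hasDerivAt_const_div_sq hx hx₀)).fun_mul hl).congr_deriv ?_
  push_cast
  field

end ErmakovSystem

theorem hasDerivAt_lamFun {c d : ℝ → ℝ} (hc : Continuous c) (hd : Continuous d) (t : ℝ) :
    HasDerivAt (lamFun c d) ((c t - d t) * lamFun c d t) t :=
  ((hc.sub hd).integral_hasStrictDerivAt 0 t).hasDerivAt.exp.congr_deriv (mul_comm _ _)

/-- The momentum conjugate to the position `κ`: solving Hamilton's equation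
`κ' = ∂H/∂p = 2 a p + (c + d) κ` of the classical Hamiltonian `H = a p² + b x² + (c + d) p x`
for `p`. It takes the junk value `0` where `a` vanishes. -/
noncomputable def conjMomentum (a c d κ : ℝ → ℝ) (t : ℝ) : ℝ :=
  (deriv κ t - (c t + d t) * κ t) / (2 * a t)

section ConjMomentum

variable {a b c d κ : ℝ → ℝ} {C₀ t : ℝ}

theorem deriv_eq_conjMomentum (ha₀ : a t ≠ 0) :
    deriv κ t = 2 * a t * conjMomentum a c d κ t + (c t + d t) * κ t := by
  rw [conjMomentum]
  field

theorem hasDerivAt_conjMomentum (ha : DifferentiableAt ℝ a t) (hc : DifferentiableAt ℝ c t)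
    (hd : DifferentiableAt ℝ d t) (hκ : DifferentiableAt ℝ κ t)
    (hκ' : DifferentiableAt ℝ (deriv κ) t) (ha₀ : a t ≠ 0) (hκ₀ : κ t ≠ 0)
    (hErm : deriv (deriv κ) t - (deriv a t / a t) * deriv κ t
        + (4 * a t * b t + (deriv a t / a t - c t - d t) * (c t + d t)
            - deriv c t - deriv d t) * κ t
        = C₀ * (2 * a t) ^ 2 / κ t ^ 3) :
    HasDerivAt (conjMomentum a c d κ)
      (-2 * b t * κ t - (c t + d t) * conjMomentum a c d κ t + 2 * a t * C₀ / κ t ^ 3) t := by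
  have hquot := (hκ'.hasDerivAt.fun_sub
    ((hc.hasDerivAt.fun_add hd.hasDerivAt).fun_mul hκ.hasDerivAt)).fun_div
    (ha.hasDerivAt.const_mul 2) (mul_ne_zero two_ne_zero ha₀)
  have hκ'' : deriv (deriv κ) t = C₀ * (2 * a t) ^ 2 / κ t ^ 3
      - (4 * a t * b t + (deriv a t / a t - c t - d t) * (c t + d t)
          - deriv c t - deriv d t) * κ t + (deriv a t / a t) * deriv κ t := by
    linear_combination hErm
  refine hquot.congr_deriv ?_
  rw [conjMomentum, hκ'']
  field

theorem Cfun_eq_neg_mul_conjMomentum_mul :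
    Cfun a c d κ = fun s => -(κ s * conjMomentum a c d κ s) * lamFun c d s := by
  funext s
  rw [Cfun, conjMomentum]
  ring

end ConjMomentum

theorem statement_6_general
    (a b c d κ : ℝ → ℝ) (C₀ t : ℝ)
    (hc : Continuous c) (hd : Continuous d)
    (ha' : DifferentiableAt ℝ a t) (hc' : DifferentiableAt ℝ c t) (hd' : DifferentiableAt ℝ d t)
    (hκ' : DifferentiableAt ℝ κ t) (hκ'' : DifferentiableAt ℝ (deriv κ) t)
    (ha₀ : a t ≠ 0) (hκ₀ : κ t ≠ 0)
    (hErm : deriv (deriv κ) t - (deriv a t / a t) * deriv κ t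
        + (4 * a t * b t + (deriv a t / a t - c t - d t) * (c t + d t)
            - deriv c t - deriv d t) * κ t
        = C₀ * (2 * a t) ^ 2 / κ t ^ 3) :
    HasDerivAt (Afun c d κ) ((3 * c t + d t) * Afun c d κ t - 4 * a t * Cfun a c d κ t) t ∧
    HasDerivAt (Bfun a c d κ C₀)
      (4 * b t * Cfun a c d κ t - (c t + 3 * d t) * Bfun a c d κ C₀ t) t ∧
    HasDerivAt (Cfun a c d κ)
      ((c t - d t) * Cfun a c d κ t
        - 2 * (a t * Bfun a c d κ C₀ t - b t * Afun c d κ t)) t := by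
  have hx := hκ'.hasDerivAt.congr_deriv (deriv_eq_conjMomentum (c := c) (d := d) ha₀)
  have hp := hasDerivAt_conjMomentum ha' hc' hd' hκ' hκ'' ha₀ hκ₀ hErm
  have hl := hasDerivAt_lamFun hc hd t
  rw [Cfun_eq_neg_mul_conjMomentum_mul]
  exact ⟨hasDerivAt_sq_mul_of_ermakovSystem hx hl,
    hasDerivAt_sq_add_div_sq_mul_of_ermakovSystem hx hp hl hκ₀,
    hasDerivAt_neg_mul_mul_of_ermakovSystem hx hp hl hκ₀⟩

/-- Lemma 3, verification: if κ solves the auxiliary (Ermakov) equation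
κ′′ − (a′/a)κ′ + [4ab + (a′/a − c − d)(c+d) − c′ − d′]κ = C₀(2a)²/κ³, then
A = κ²λ, B = [((κ′−(c+d)κ)/(2a))² + C₀/κ²]λ, C = κ((c+d)κ−κ′)/(2a)·λ satisfy
A′ + 4aC − (3c+d)A = 0, B′ − 4bC + (c+3d)B = 0, C′ + 2(aB − bA) − (c−d)C = 0. -/
theorem statement_6
    (a b c d κ : ℝ → ℝ) (C₀ : ℝ)
    (ha : ContDiff ℝ 1 a) (hc : ContDiff ℝ 1 c) (hd : ContDiff ℝ 1 d)
    (hb : Continuous b)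
    (hane : ∀ t, a t ≠ 0)
    (hκ : ContDiff ℝ 2 κ) (hκne : ∀ t, κ t ≠ 0)
    -- the auxiliary (Ermakov) equation
    (hErm : ∀ t, deriv (deriv κ) t - (deriv a t / a t) * deriv κ t
        + (4 * a t * b t + (deriv a t / a t - c t - d t) * (c t + d t)
            - deriv c t - deriv d t) * κ t
        = C₀ * (2 * a t) ^ 2 / κ t ^ 3) :
    (∀ t, deriv (Afun c d κ) t + 4 * a t * Cfun a c d κ t
        - (3 * c t + d t) * Afun c d κ t = 0) ∧
    (∀ t, deriv (Bfun a c d κ C₀) t - 4 * b t * Cfun a c d κ t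
        + (c t + 3 * d t) * Bfun a c d κ C₀ t = 0) ∧
    (∀ t, deriv (Cfun a c d κ) t
        + 2 * (a t * Bfun a c d κ C₀ t - b t * Afun c d κ t)
        - (c t - d t) * Cfun a c d κ t = 0) := by
  have h t := statement_6_general a b c d κ C₀ t hc.continuous hd.continuous
    (ha.differentiable_one t) (hc.differentiable_one t) (hd.differentiable_one t)
    (hκ.differentiable two_ne_zero t) (hκ.differentiable_deriv_two t) (hane t) (hκne t) (hErm t)
  exact ⟨fun t => by linear_combination (h t).1.deriv,
    fun t => by linear_combination (h t).2.1.deriv,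
    fun t => by linear_combination (h t).2.2.deriv⟩
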